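/- Let K be a countably infinite field (with the discrete topology) and consider the K*-action on K̂ × K̂ given by a.(ξ₁, ξ₂) = (a*ξ₁, (a^{-1})*ξ₂) for a ∈ K*. This action has exactly four ergodic invariant Borel probability measures: δ₁ ⊗ δ₁, δ₁ ⊗ m_{K̂}, m_{K̂} ⊗ δ₁, and m_{K̂} ⊗ m_{K̂}, where δ₁ is the point mass at the trivial character. -/

import Mathlib

open MeasureTheory Filter

noncomputable section

/-- The Pontryagin dual of the additive group of `K`. -/
abbrev AddDual (K : Type*) [AddCommGroup K] [TopologicalSpace K] : Type _ :=
  PontryaginDual (Multiplicative K)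

/-- Precomposition of a character with an additive homomorphism. -/
def dualComp {A B : Type*} [AddCommGroup A] [AddCommGroup B]
    [TopologicalSpace A] [DiscreteTopology A] [TopologicalSpace B]
    (f : A →+ B) (ξ : AddDual B) : AddDual A :=
  ξ.comp ⟨AddMonoidHom.toMultiplicative f, continuous_of_discreteTopology⟩

/-- The dual action of multiplication by `a`: `(dualSmul a ξ) b = ξ (a * b)`. -/
def dualSmul {K : Type*} [Field K] [TopologicalSpace K] [DiscreteTopology K]
    (a : K) (ξ : AddDual K) : AddDual K :=
  dualComp (AddMonoidHom.mulLeft a) ξ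

/-- Ergodicity of a measure with respect to a family of transformations. -/
def IsErgodicFamily {X : Type*} [MeasurableSpace X] {ι : Sort*}
    (T : ι → X → X) (μ : Measure X) : Prop :=
  ∀ s : Set X, MeasurableSet s → (∀ i, T i ⁻¹' s = s) → μ s = 0 ∨ μ s = 1

/-!
A bounded family in a Hilbert space whose members are asymptotically orthogonal to each fixed one
tends weakly to zero. Applied to the characters along an orbit of the action, this shows that the
integral of a character over an invariant set vanishes as soon as the correlations along its orbit
decay.

On one factor, invariance makes all nontrivial Fourier coefficients of a measure equal, so that it
is a combination of Haar measure and `δ₁`, and ergodicity leaves only the two extremes. If one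
marginal of an ergodic `θ` is `δ₁`, then `θ` is a product. If both are Haar measure, invariance
gives `θ̂(x, y) = θ̂(xy, 1)`, so the correlation of the `a`-th and `b`-th characters on the orbit of
`(x, y)` is `θ̂((b - a)(b⁻¹ - a⁻¹)xy, 1)`. For fixed `a` and `x, y ≠ 0`, the first entry leaves
every finite set as `b` varies, while `θ̂(t, 1) → 0` because the characters `(t, 0)` are orthonormal
for `θ`. Hence `θ̂(x, y) = 0`, and `θ` is the product of its marginals.
-/

open scoped Topology BoundedContinuousFunction InnerProductSpace

section HilbertSpace

variable {𝕜 H ι : Type*} [RCLike 𝕜] [NormedAddCommGroup H] [InnerProductSpace 𝕜 H]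
  {u : ι → H} {l : Filter ι} {C : ℝ}

theorem tendsto_inner_zero_of_mem_closure {s : Set H} (hC : ∀ i, ‖u i‖ ≤ C)
    (hs : ∀ w ∈ s, Tendsto (fun j => ⟪w, u j⟫_𝕜) l (𝓝 0)) {v : H} (hv : v ∈ closure s) :
    Tendsto (fun j => ⟪v, u j⟫_𝕜) l (𝓝 0) := by
  refine Metric.tendsto_nhds.2 fun ε hε => ?_
  obtain ⟨δ, hδ, hδC⟩ : ∃ δ > 0, δ * C < ε / 2 := by
    refine ⟨ε / 2 / (|C| + 1), by positivity, ?_⟩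
    rw [div_mul_eq_mul_div, div_lt_iff₀ (by positivity)]
    nlinarith [le_abs_self C]
  obtain ⟨w, hw, hvw⟩ := Metric.mem_closure_iff.1 hv δ hδ
  filter_upwards [Metric.tendsto_nhds.1 (hs w hw) (ε / 2) (half_pos hε)] with j hj
  rw [dist_zero_right] at hj ⊢
  calc ‖⟪v, u j⟫_𝕜‖ = ‖⟪v - w, u j⟫_𝕜 + ⟪w, u j⟫_𝕜‖ := by rw [inner_sub_left, sub_add_cancel]
    _ ≤ ‖v - w‖ * ‖u j‖ + ‖⟪w, u j⟫_𝕜‖ :=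
      (norm_add_le _ _).trans (add_le_add_left (norm_inner_le_norm _ _) _)
    _ ≤ δ * C + ‖⟪w, u j⟫_𝕜‖ := by
      gcongr
      · exact (dist_eq_norm v w ▸ hvw).le
      · exact hC j
    _ < ε := by linarith

theorem tendsto_inner_zero_of_tendsto_inner_family_zero [CompleteSpace H] (hC : ∀ i, ‖u i‖ ≤ C)
    (h : ∀ i, Tendsto (fun j => ⟪u i, u j⟫_𝕜) l (𝓝 0)) (v : H) :
    Tendsto (fun j => ⟪v, u j⟫_𝕜) l (𝓝 0) := by
  let U : Submodule 𝕜 H := Submodule.span 𝕜 (Set.range u)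
  have hspan : ∀ w ∈ U, Tendsto (fun j => ⟪w, u j⟫_𝕜) l (𝓝 0) := by
    intro w hw
    induction hw using Submodule.span_induction with
    | mem w hw => obtain ⟨i, rfl⟩ := hw; exact h i
    | zero => simpa using tendsto_const_nhds
    | add w w' _ _ hw hw' => simpa [inner_add_left] using hw.add hw'
    | smul c w _ hw => simpa [inner_smul_left] using hw.const_mul (starRingEnd 𝕜 c)
  obtain ⟨p, hp, q, hq, rfl⟩ := U.topologicalClosure.exists_add_mem_mem_orthogonal v
  have hqu : ∀ j, ⟪q, u j⟫_𝕜 = 0 := fun j =>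
    (Submodule.mem_orthogonal' _ q).1 hq (u j)
      (U.le_topologicalClosure (Submodule.subset_span ⟨j, rfl⟩))
  simpa [inner_add_left, hqu] using tendsto_inner_zero_of_mem_closure hC hspan hp

end HilbertSpace

section Measure

variable {X Y : Type*} [MeasurableSpace X] [MeasurableSpace Y]

theorem ext_of_forall_mem_submonoid_integral_eq {𝕜 : Type*} [RCLike 𝕜] [TopologicalSpace X]
    [PolishSpace X] [BorelSpace X] {M : Submonoid (X →ᵇ 𝕜)} (hstar : ∀ f ∈ M, star f ∈ M)
    (hsep : ∀ x y, (∀ f ∈ M, f x = f y) → x = y)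
    {P Q : Measure X} [IsFiniteMeasure P] [IsFiniteMeasure Q]
    (h : ∀ f ∈ M, ∫ x, f x ∂P = ∫ x, f x ∂Q) : P = Q := by
  have hspan : (StarAlgebra.adjoin 𝕜 (M : Set (X →ᵇ 𝕜))).toSubalgebra.toSubmodule
      = Submodule.span 𝕜 M := by
    have hM : (M : Set (X →ᵇ 𝕜)) ∪ star (M : Set (X →ᵇ 𝕜)) = M :=
      Set.union_eq_left.2 fun f hf => by simpa using hstar _ hf
    rw [StarAlgebra.adjoin_eq_span, hM, Submonoid.closure_eq]
  refine ext_of_forall_mem_subalgebra_integral_eq_of_polish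
    (A := StarAlgebra.adjoin 𝕜 (M : Set (X →ᵇ 𝕜))) (fun x y hxy => ?_) fun g hg => ?_
  · by_contra! hcon
    exact hxy <| hsep x y fun f hf =>
      hcon f ⟨f.toContinuousMap, ⟨f, StarAlgebra.subset_adjoin 𝕜 _ hf, rfl⟩, rfl⟩
  · have hgM : g ∈ Submodule.span 𝕜 (M : Set (X →ᵇ 𝕜)) := hspan ▸ hg
    clear hg
    induction hgM using Submodule.span_induction with
    | mem f hf => exact h f hf
    | zero => simp
    | add f g _ _ hf hg =>
      simp only [BoundedContinuousFunction.coe_add, Pi.add_apply]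
      rw [integral_add (f.integrable P) (g.integrable P), hf, hg,
        integral_add (f.integrable Q) (g.integrable Q)]
    | smul c f _ hf =>
      simp only [BoundedContinuousFunction.coe_smul, integral_smul, hf]

theorem inner_toLp_toLp {𝕜 E : Type*} [RCLike 𝕜] [NormedAddCommGroup E] [InnerProductSpace 𝕜 E]
    {μ : Measure X} {f g : X → E} (hf : MemLp f 2 μ) (hg : MemLp g 2 μ) :
    ⟪hf.toLp f, hg.toLp g⟫_𝕜 = ∫ x, ⟪f x, g x⟫_𝕜 ∂μ := by
  rw [L2.inner_def]
  refine integral_congr_ae ?_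
  filter_upwards [hf.coeFn_toLp, hg.coeFn_toLp] with x hfx hgx
  rw [hfx, hgx]

theorem eq_dirac_prod_snd_of_fst_eq_dirac [MeasurableSingletonClass X] {θ : Measure (X × Y)}
    [SFinite θ] {a : X} (h : θ.fst = Measure.dirac a) : θ = (Measure.dirac a).prod θ.snd := by
  have hae : ∀ᵐ p ∂θ, p.1 = a := by
    refine ae_of_ae_map measurable_fst.aemeasurable (p := fun x => x = a) ?_
    change ∀ᵐ x ∂θ.fst, x = a
    simp [h, ae_dirac_eq]
  rw [Measure.dirac_prod, Measure.snd, Measure.map_map measurable_prodMk_left measurable_snd]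
  conv_lhs => rw [← Measure.map_id (μ := θ)]
  refine Measure.map_congr ?_
  filter_upwards [hae] with p hp
  exact Prod.ext hp rfl

theorem eq_prod_dirac_of_snd_eq_dirac [MeasurableSingletonClass Y] {θ : Measure (X × Y)}
    [SFinite θ] {b : Y} (h : θ.snd = Measure.dirac b) : θ = θ.fst.prod (Measure.dirac b) := by
  have hswap := eq_dirac_prod_snd_of_fst_eq_dirac (θ := θ.map Prod.swap) (a := b)
    (by rw [Measure.fst_map_swap, h])
  rw [Measure.snd_map_swap] at hswap
  rw [← Measure.prod_swap, ← hswap, Measure.map_map measurable_swap measurable_swap,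
    Prod.swap_swap_eq, Measure.map_id]

namespace IsErgodicFamily

variable {ι : Sort*} {T : ι → X → X} {S : ι → Y → Y} {μ : Measure X}

theorem map (hμ : IsErgodicFamily T μ) {π : X → Y} (hπ : Measurable π)
    (h : ∀ i, Function.Semiconj π (T i) (S i)) : IsErgodicFamily S (μ.map π) := by
  intro s hs hsS
  rw [Measure.map_apply hπ hs]
  refine hμ _ (hπ hs) fun i => ?_
  rw [← Set.preimage_comp, (h i).comp_eq, Set.preimage_comp, hsS i]

theorem of_comp {κ : Sort*} {f : κ → ι} (hμ : IsErgodicFamily (T ∘ f) μ) : IsErgodicFamily T μ :=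
  fun s hs hsT => hμ s hs fun k => hsT (f k)

end IsErgodicFamily

end Measure

section CharCoeff

variable {V W X Y : Type*} [AddCommGroup V] [AddCommGroup W] [TopologicalSpace X]
  [TopologicalSpace Y]

/-- The characters `(x, y) ↦ e_v(x) f_w(y)` of a product, indexed by `(v, w)`. -/
def charProd (e : AddChar V C(X, Circle)) (f : AddChar W C(Y, Circle)) :
    AddChar (V × W) C(X × Y, Circle) where
  toFun p := (e p.1).comp ContinuousMap.fst * (f p.2).comp ContinuousMap.snd
  map_zero_eq_one' := by ext; simp
  map_add_eq_mul' p q := by ext; simp [AddChar.map_add_eq_mul, mul_mul_mul_comm]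

theorem coe_charProd_apply (e : AddChar V C(X, Circle)) (f : AddChar W C(Y, Circle)) (p : V × W)
    (z : X × Y) : (charProd e f p z : ℂ) = e p.1 z.1 * f p.2 z.2 := rfl

theorem charProd_separates {e : AddChar V C(X, Circle)} {f : AddChar W C(Y, Circle)}
    (he : Function.Injective fun x v => e v x) (hf : Function.Injective fun y w => f w y) :
    Function.Injective fun z p => charProd e f p z := by
  intro z z' h
  refine Prod.ext (he <| funext fun v => ?_) (hf <| funext fun w => ?_)
  · simpa [charProd] using congrFun h (v, 0)
  · simpa [charProd] using congrFun h (0, w)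

theorem coe_char_sub (e : AddChar V C(X, Circle)) (v w : V) (x : X) :
    (e (w - v) x : ℂ) = e w x * starRingEnd ℂ (e v x) := by
  rw [AddChar.map_sub_eq_div, ContinuousMap.div_apply, Circle.coe_div, div_eq_mul_inv,
    ← Circle.coe_inv, Circle.coe_inv_eq_conj]

theorem coe_char_neg (e : AddChar V C(X, Circle)) (v : V) (x : X) :
    (e (-v) x : ℂ) = starRingEnd ℂ (e v x) := by
  simpa using coe_char_sub e v 0 x

theorem continuous_coe_char (e : AddChar V C(X, Circle)) (v : V) :
    Continuous fun x => (e v x : ℂ) := by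
  fun_prop

variable [MeasurableSpace X] [MeasurableSpace Y]

/-- The Fourier coefficient `μ̂(v) = ∫ e_v dμ` of a measure `μ` on `X`, for circle-valued functions
`e_v` on `X` that are indexed homomorphically by an abelian group `V`. -/
def charCoeff (e : AddChar V C(X, Circle)) (μ : Measure X) (v : V) : ℂ :=
  ∫ x, (e v x : ℂ) ∂μ

theorem charCoeff_zero (e : AddChar V C(X, Circle)) (μ : Measure X) [IsProbabilityMeasure μ] :
    charCoeff e μ 0 = 1 := by
  simp [charCoeff]

theorem charCoeff_neg (e : AddChar V C(X, Circle)) (μ : Measure X) (v : V) :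
    charCoeff e μ (-v) = starRingEnd ℂ (charCoeff e μ v) := by
  simp only [charCoeff, coe_char_neg, integral_conj]

theorem charCoeff_eq_one_of_ae {e : AddChar V C(X, Circle)} {μ : Measure X}
    [IsProbabilityMeasure μ] {v : V} (h : ∀ᵐ x ∂μ, e v x = 1) : charCoeff e μ v = 1 := by
  have hone : ∀ᵐ x ∂μ, (e v x : ℂ) = 1 := h.mono fun x hx => by simp [hx]
  simp [charCoeff, integral_congr_ae hone]

theorem charCoeff_prod (e : AddChar V C(X, Circle)) (f : AddChar W C(Y, Circle)) (μ : Measure X)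
    (ν : Measure Y) [SFinite μ] [SFinite ν] (p : V × W) :
    charCoeff (charProd e f) (μ.prod ν) p = charCoeff e μ p.1 * charCoeff f ν p.2 :=
  integral_prod_mul (fun x => (e p.1 x : ℂ)) (fun y => (f p.2 y : ℂ))

section OpensMeasurableSpace

variable [OpensMeasurableSpace X] (e : AddChar V C(X, Circle)) (μ : Measure X)

theorem memLp_char [IsFiniteMeasure μ] (p : ENNReal) (v : V) :
    MemLp (fun x => (e v x : ℂ)) p μ :=
  .of_bound (continuous_coe_char e v).aestronglyMeasurable 1
    (.of_forall fun _ => (Circle.norm_coe _).le)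

theorem charCoeff_add_measure (ν : Measure X) [IsFiniteMeasure μ] [IsFiniteMeasure ν] (v : V) :
    charCoeff e (μ + ν) v = charCoeff e μ v + charCoeff e ν v :=
  integral_add_measure ((memLp_char e μ 1 v).integrable le_rfl)
    ((memLp_char e ν 1 v).integrable le_rfl)

theorem charCoeff_map {Z : Type*} [MeasurableSpace Z] {ν : Measure Z} {T : Z → X}
    (hT : AEMeasurable T ν) (v : V) : charCoeff e (ν.map T) v = ∫ z, (e v (T z) : ℂ) ∂ν :=
  integral_map hT (continuous_coe_char e v).aestronglyMeasurable

variable {e μ} {ι : Type*} {l : Filter ι} [IsFiniteMeasure μ]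

theorem tendsto_integral_mul_char_zero {w : ι → V}
    (h : ∀ i, Tendsto (fun j => charCoeff e μ (w j - w i)) l (𝓝 0)) {g : X → ℂ}
    (hg : MemLp g 2 μ) : Tendsto (fun j => ∫ x, g x * e (w j) x ∂μ) l (𝓝 0) := by
  have hchar : ∀ i, MemLp (fun x => (e (w i) x : ℂ)) 2 μ := fun i => memLp_char e μ 2 (w i)
  have hbound : ∀ i, ‖(hchar i).toLp‖ ≤ μ.real Set.univ ^ (2 : ENNReal).toReal⁻¹ * 1 := fun i => by
    refine Lp.norm_le_of_ae_bound zero_le_one ?_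
    filter_upwards [(hchar i).coeFn_toLp] with x hx
    rw [hx, Circle.norm_coe]
  have hinner : ∀ i, Tendsto (fun j => ⟪(hchar i).toLp, (hchar j).toLp⟫_ℂ) l (𝓝 0) := fun i => by
    simpa only [inner_toLp_toLp, RCLike.inner_apply, ← coe_char_sub, charCoeff] using h i
  simpa only [inner_toLp_toLp, RCLike.inner_apply', Pi.star_apply, RCLike.star_def,
    RingHomCompTriple.comp_apply, RingHom.id_apply] using
    tendsto_inner_zero_of_tendsto_inner_family_zero hbound hinner hg.star.toLp

theorem tendsto_setIntegral_char_zero {w : ι → V}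
    (h : ∀ i, Tendsto (fun j => charCoeff e μ (w j - w i)) l (𝓝 0)) {s : Set X}
    (hs : MeasurableSet s) : Tendsto (fun j => ∫ x in s, (e (w j) x : ℂ) ∂μ) l (𝓝 0) := by
  have hmul : ∀ v x, s.indicator (fun _ => (1 : ℂ)) x * e v x
      = s.indicator (fun x => (e v x : ℂ)) x := fun v x => by
    by_cases hx : x ∈ s <;> simp [hx]
  simpa only [hmul, integral_indicator hs] using tendsto_integral_mul_char_zero h
    (memLp_indicator_const 2 hs (1 : ℂ) (.inr (measure_ne_top μ s)))

/-- Along the orbit `S_j v` the integral over an invariant set is constant, while decay of the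
correlations forces it to tend to zero. -/
theorem setIntegral_char_eq_zero_of_tendsto [l.NeBot] {T : ι → X → X} {S : ι → V → V}
    (hT : ∀ i, MeasurePreserving (T i) μ μ) (hTS : ∀ i v x, e v (T i x) = e (S i v) x) {v : V}
    (hdecay : ∀ i, Tendsto (fun j => charCoeff e μ (S j v - S i v)) l (𝓝 0)) {s : Set X}
    (hs : MeasurableSet s) (hsT : ∀ i, T i ⁻¹' s = s) : ∫ x in s, (e v x : ℂ) ∂μ = 0 := by
  have hconst : ∀ j, ∫ x in s, (e (S j v) x : ℂ) ∂μ = ∫ x in s, (e v x : ℂ) ∂μ := fun j => by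
    conv_rhs => rw [← (hT j).map_eq, setIntegral_map hs
      (continuous_coe_char e v).aestronglyMeasurable (hT j).measurable.aemeasurable, hsT j]
    simp only [hTS]
  have hlim := tendsto_setIntegral_char_zero hdecay hs
  simp only [hconst] at hlim
  exact tendsto_nhds_unique tendsto_const_nhds hlim

end OpensMeasurableSpace

theorem charCoeff_fst [OpensMeasurableSpace X] (e : AddChar V C(X, Circle))
    (f : AddChar W C(Y, Circle)) (θ : Measure (X × Y)) (v : V) :
    charCoeff e θ.fst v = charCoeff (charProd e f) θ (v, 0) := by
  rw [Measure.fst, charCoeff_map e measurable_fst.aemeasurable]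
  simp [charCoeff, coe_charProd_apply]

theorem charCoeff_snd [OpensMeasurableSpace Y] (e : AddChar V C(X, Circle))
    (f : AddChar W C(Y, Circle)) (θ : Measure (X × Y)) (w : W) :
    charCoeff f θ.snd w = charCoeff (charProd e f) θ (0, w) := by
  rw [Measure.snd, charCoeff_map f measurable_snd.aemeasurable]
  simp [charCoeff, coe_charProd_apply]

variable [PolishSpace X] [BorelSpace X] {e : AddChar V C(X, Circle)} {μ : Measure X}

theorem ext_of_charCoeff (he : Function.Injective fun x v => e v x) {ν : Measure X}
    [IsFiniteMeasure μ] [IsFiniteMeasure ν] (h : ∀ v, charCoeff e μ v = charCoeff e ν v) :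
    μ = ν := by
  let bounded : AddChar V (X →ᵇ ℂ) :=
    { toFun v := .ofNormedAddCommGroup (fun x => (e v x : ℂ)) (continuous_coe_char e v) 1
        fun x => (Circle.norm_coe _).le
      map_zero_eq_one' := by ext; simp
      map_add_eq_mul' v w := by ext; simp [AddChar.map_add_eq_mul] }
  refine ext_of_forall_mem_submonoid_integral_eq (M := MonoidHom.mrange bounded.toMonoidHom)
    ?_ ?_ ?_
  · rintro _ ⟨v, rfl⟩
    refine ⟨.ofAdd (-v.toAdd), BoundedContinuousFunction.ext fun x => ?_⟩
    exact coe_char_neg e v.toAdd x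
  · exact fun x y hxy => he <| funext fun v => Circle.ext <| hxy _ ⟨.ofAdd v, rfl⟩
  · rintro _ ⟨v, rfl⟩
    exact h v.toAdd

theorem isErgodicFamily_of_tendsto_charCoeff [IsProbabilityMeasure μ]
    (he : Function.Injective fun x v => e v x) {ι : Type*} {l : Filter ι} [l.NeBot]
    {T : ι → X → X} {S : ι → V → V} (hT : ∀ i, MeasurePreserving (T i) μ μ)
    (hTS : ∀ i v x, e v (T i x) = e (S i v) x)
    (h : ∀ v, (∀ᵐ x ∂μ, e v x = 1) ∨
      ∀ i, Tendsto (fun j => charCoeff e μ (S j v - S i v)) l (𝓝 0)) :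
    IsErgodicFamily T μ := by
  intro s hs hsT
  have : IsFiniteMeasure (μ s • μ) := Measure.smul_finite μ (measure_ne_top μ s)
  have hrestrict : μ.restrict s = μ s • μ := by
    refine ext_of_charCoeff he fun v => ?_
    rw [charCoeff, charCoeff, integral_smul_measure]
    rcases h v with hone | hdecay
    · have hone : ∀ᵐ x ∂μ, (e v x : ℂ) = 1 := hone.mono fun x hx => by simp [hx]
      rw [integral_congr_ae hone, integral_congr_ae (ae_restrict_of_ae hone)]
      simp [Measure.real]
    · have huniv : ∫ x, (e v x : ℂ) ∂μ = 0 := by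
        simpa using setIntegral_char_eq_zero_of_tendsto hT hTS hdecay .univ fun _ => rfl
      rw [setIntegral_char_eq_zero_of_tendsto hT hTS hdecay hs hsT, huniv, smul_zero]
  have hsq : μ s = μ s * μ s := by simpa using congrArg (· s) hrestrict
  refine or_iff_not_imp_left.2 fun h0 => ?_
  exact ((ENNReal.mul_eq_left h0 (measure_ne_top μ s)).1 hsq.symm)

end CharCoeff

section DualGroup

theorem exists_injective_addMonoidHom_ratAddCircle :
    ∃ j : AddCircle (1 : ℚ) →+ AddCircle (1 : ℝ), Function.Injective j := by
  refine ⟨QuotientAddGroup.map _ _ (Rat.castHom ℝ : ℚ →+ ℝ)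
    (by simp [AddSubgroup.zmultiples_le]), (injective_iff_map_eq_zero _).2 fun q => ?_⟩
  induction q using QuotientAddGroup.induction_on with
  | H q =>
    intro hq
    obtain ⟨n, hn⟩ := (AddCircle.coe_eq_zero_iff (1 : ℝ)).1 (show ((q : ℝ) : AddCircle (1 : ℝ)) = 0
      from hq)
    refine (AddCircle.coe_eq_zero_iff _).2 ⟨n, Rat.cast_injective (α := ℝ) ?_⟩
    simpa using hn

variable (A : Type*) [AddCommGroup A] [TopologicalSpace A]

/-- The evaluation characters `ξ ↦ ξ(a)` of the dual group of `A`, indexed by `a : A`. -/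
def dualChar : AddChar A C(AddDual A, Circle) where
  toFun a := ⟨fun ξ => ξ (.ofAdd a), by
    exact continuous_eval_const (F := Multiplicative A →ₜ* Circle) (.ofAdd a)⟩
  map_zero_eq_one' := by ext ξ; simp
  map_add_eq_mul' a b := by ext ξ; exact congrArg _ (map_mul ξ (.ofAdd a) (.ofAdd b))

theorem dualChar_separates : Function.Injective fun (ξ : AddDual A) a => dualChar A a ξ :=
  fun _ _ h => PontryaginDual.ext fun a => congrFun h a.toAdd

variable {A}

theorem dualChar_one_right (a : A) : dualChar A a 1 = 1 := rfl

theorem charCoeff_dirac_one [MeasurableSpace (AddDual A)] [BorelSpace (AddDual A)] (a : A) :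
    charCoeff (dualChar A) (Measure.dirac 1) a = 1 :=
  charCoeff_eq_one_of_ae (by simp [ae_dirac_eq, dualChar_one_right])

variable [DiscreteTopology A]

theorem exists_dualChar_ne_one {a : A} (ha : a ≠ 0) : ∃ ξ : AddDual A, dualChar A a ξ ≠ 1 := by
  obtain ⟨c, hc⟩ := CharacterModule.exists_character_apply_ne_zero_of_ne_zero ha
  obtain ⟨j, hj⟩ := exists_injective_addMonoidHom_ratAddCircle
  let ψ : AddChar A Circle :=
    { toFun b := AddCircle.toCircle (j (c b))
      map_zero_eq_one' := by simp
      map_add_eq_mul' b b' := by simp [AddCircle.toCircle_add] }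
  refine ⟨(⟨ψ.toMonoidHom, continuous_of_discreteTopology⟩ : Multiplicative A →ₜ* Circle),
    fun h => hc (hj (AddCircle.injective_toCircle one_ne_zero ?_))⟩
  rw [map_zero, AddCircle.toCircle_zero]
  exact h

instance [Countable A] : SecondCountableTopology (AddDual A) :=
  have : Countable (Multiplicative A) := ‹Countable A›
  (ContinuousMonoidHom.isInducing_toContinuousMap
    (Multiplicative A) Circle).secondCountableTopology

instance [Countable A] : PolishSpace (AddDual A) :=
  let _ := TopologicalSpace.metrizableSpaceMetric (AddDual A)
  inferInstance

variable [MeasurableSpace (AddDual A)] [BorelSpace (AddDual A)] (mA : Measure (AddDual A))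
  [mA.IsHaarMeasure]

theorem charCoeff_haar_of_ne_zero {a : A} (ha : a ≠ 0) : charCoeff (dualChar A) mA a = 0 := by
  obtain ⟨η, hη⟩ := exists_dualChar_ne_one ha
  have hmul : ∀ ξ, (dualChar A a (η * ξ) : ℂ) = dualChar A a η * dualChar A a ξ := fun ξ =>
    Circle.coe_mul _ _
  have htranslate : (dualChar A a η : ℂ) * charCoeff (dualChar A) mA a
      = charCoeff (dualChar A) mA a := by
    simpa only [charCoeff, hmul, integral_const_mul] using
      integral_mul_left_eq_self (μ := mA) (fun ξ => (dualChar A a ξ : ℂ)) η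
  have hη' : (dualChar A a η : ℂ) ≠ 1 := fun h => hη (Circle.ext h)
  exact (mul_left_eq_self₀.1 htranslate).resolve_left hη'

theorem tendsto_charCoeff_haar_sub (a : A) :
    Tendsto (fun b => charCoeff (dualChar A) mA (b - a)) cofinite (𝓝 0) := by
  refine tendsto_const_nhds.congr' ?_
  filter_upwards [(Set.finite_singleton a).compl_mem_cofinite] with b hb
  rw [charCoeff_haar_of_ne_zero mA (sub_ne_zero.2 hb)]

theorem haar_singleton_one [Infinite A] : mA {1} = 0 := by
  have hlim := tendsto_setIntegral_char_zero (w := id) (tendsto_charCoeff_haar_sub mA)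
    (measurableSet_singleton 1)
  refine (measureReal_eq_zero_iff (measure_ne_top mA {1})).1 ?_
  simpa [integral_singleton, dualChar_one_right, Measure.real] using hlim

/-- A marginal equal to Haar measure makes the characters `(a, v)` with fixed `v` orthonormal, so
they tend weakly to zero. -/
theorem tendsto_charCoeff_of_fst_eq_haar {V Y : Type*} [AddCommGroup V] [TopologicalSpace Y]
    [MeasurableSpace Y] [OpensMeasurableSpace (AddDual A × Y)] (f : AddChar V C(Y, Circle))
    {θ : Measure (AddDual A × Y)} [IsFiniteMeasure θ] (hθ : θ.fst = mA) (v : V) :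
    Tendsto (fun a => charCoeff (charProd (dualChar A) f) θ (a, v)) cofinite (𝓝 0) := by
  have hdecay : ∀ a : A, Tendsto
      (fun b => charCoeff (charProd (dualChar A) f) θ ((b, 0) - (a, 0))) cofinite (𝓝 0) := by
    intro a
    simpa only [Prod.mk_sub_mk, sub_zero, ← charCoeff_fst, hθ] using
      tendsto_charCoeff_haar_sub mA a
  refine (tendsto_integral_mul_char_zero hdecay
    (memLp_char (charProd (dualChar A) f) θ 2 (0, v))).congr fun a => ?_
  simp [charCoeff, coe_charProd_apply, mul_comm]

variable [Countable A] [IsProbabilityMeasure mA] {μ : Measure (AddDual A)} [IsProbabilityMeasure μ]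

theorem eq_haar_of_charCoeff_eq_zero (h : ∀ x ≠ 0, charCoeff (dualChar A) μ x = 0) : μ = mA := by
  refine ext_of_charCoeff (dualChar_separates A) fun x => ?_
  rcases eq_or_ne x 0 with rfl | hx
  · rw [charCoeff_zero, charCoeff_zero]
  · rw [h x hx, charCoeff_haar_of_ne_zero mA hx]

/-- Such a measure would be `(1 - r) mA + r δ₁`; the negative parts are moved across the equality
so that both sides stay measures. -/
theorem eq_haar_of_charCoeff_eq_const [Infinite A] {r : ℝ}
    (hr : ∀ x ≠ 0, charCoeff (dualChar A) μ x = r) (h1 : μ {1} = 0) : μ = mA := by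
  have hsplit : ((r.toNNReal : ℝ) : ℂ) - ((-r).toNNReal : ℝ) = r := by
    rw [Real.coe_toNNReal', Real.coe_toNNReal', ← Complex.ofReal_sub,
      max_zero_sub_max_neg_zero_eq_self]
  have hmeas : μ + r.toNNReal • mA + (-r).toNNReal • Measure.dirac 1
      = mA + (-r).toNNReal • mA + r.toNNReal • Measure.dirac 1 := by
    refine ext_of_charCoeff (dualChar_separates A) fun x => ?_
    have hsmul : ∀ (c : NNReal) (ν : Measure (AddDual A)),
        charCoeff (dualChar A) (c • ν) x = c * charCoeff (dualChar A) ν x := fun c ν => by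
      rw [charCoeff, integral_smul_nnreal_measure, charCoeff, NNReal.smul_def, Complex.real_smul]
    rw [charCoeff_add_measure, charCoeff_add_measure, charCoeff_add_measure, charCoeff_add_measure,
      hsmul, hsmul, hsmul, hsmul, charCoeff_dirac_one]
    rcases eq_or_ne x 0 with rfl | hx
    · rw [charCoeff_zero, charCoeff_zero]
      ring
    · rw [hr x hx, charCoeff_haar_of_ne_zero mA hx]
      linear_combination -hsplit
  have hmass : (-r).toNNReal = r.toNNReal := by
    have hdirac : Measure.dirac (1 : AddDual A) {1} = 1 := Measure.dirac_apply_of_mem rfl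
    simpa only [Measure.add_apply, Measure.smul_apply, h1, haar_singleton_one mA, hdirac,
      ENNReal.smul_def, smul_eq_mul, mul_zero, zero_add, mul_one, ENNReal.coe_inj] using
      congrArg (· {1}) hmeas
  refine eq_haar_of_charCoeff_eq_zero mA fun x hx => ?_
  rw [hr x hx, ← hsplit, hmass, sub_self]

end DualGroup

section Field

variable {K : Type*} [Field K]

instance [Infinite K] : Infinite Kˣ :=
  have : Infinite {x : K // x ≠ 0} := (Set.finite_singleton (0 : K)).infinite_compl.to_subtype
  (unitsEquivNeZero (G₀ := K)).infinite_iff.2 this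

theorem tendsto_sub_mul_inv_sub_inv_mul_cofinite (a : Kˣ) {c : K} (hc : c ≠ 0) :
    Tendsto (fun b : Kˣ => ((b : K) - a) * ((b⁻¹ : Kˣ) - (a⁻¹ : Kˣ)) * c) cofinite cofinite := by
  refine Tendsto.cofinite_of_finite_preimage_singleton fun d => ?_
  let P : Polynomial K := .C c * (.X - .C (a : K)) ^ 2 + .C (d * a) * .X
  have hP : P ≠ 0 := fun h => by
    have h0 : P.eval 0 = 0 := by rw [h, Polynomial.eval_zero]
    simp [P, hc] at h0
  refine ((Polynomial.finite_setOfPred_isRoot hP).preimage Units.val_injective.injOn).subset ?_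
  rintro b rfl
  have hba : ((b⁻¹ : Kˣ) - (a⁻¹ : Kˣ) : K) * (a * b) = a - b := by
    have ha := a.mul_inv
    have hb := b.mul_inv
    linear_combination (a : K) * hb - b * ha
  simp only [Set.mem_preimage, Set.mem_ofPred_eq, Polynomial.IsRoot.def, P, Polynomial.eval_add,
    Polynomial.eval_mul, Polynomial.eval_C, Polynomial.eval_pow, Polynomial.eval_sub,
    Polynomial.eval_X]
  linear_combination ((b : K) - a) * c * hba

variable [TopologicalSpace K] [DiscreteTopology K]

theorem dualChar_dualSmul (a x : K) (ξ : AddDual K) :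
    dualChar K x (dualSmul a ξ) = dualChar K (a * x) ξ := rfl

theorem continuous_dualSmul (a : K) : Continuous (dualSmul a : AddDual K → AddDual K) :=
  (PontryaginDual.map ⟨AddMonoidHom.toMultiplicative (AddMonoidHom.mulLeft a),
    continuous_of_discreteTopology⟩).continuous_toFun

theorem dualSmul_one_right (a : K) : dualSmul a (1 : AddDual K) = 1 := rfl

theorem dualSmul_eq_one_iff (a : Kˣ) {ξ : AddDual K} : dualSmul (a : K) ξ = 1 ↔ ξ = 1 := by
  refine ⟨fun h => dualChar_separates K <| funext fun x => ?_, ?_⟩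
  swap
  · rintro rfl
    exact dualSmul_one_right _
  have hx := congrArg (dualChar K ((a⁻¹ : Kˣ) * x)) h
  rwa [dualChar_dualSmul, Units.mul_inv_cancel_left] at hx

/-- The action `a.(ξ₁, ξ₂) = (a * ξ₁, a⁻¹ * ξ₂)` of `Kˣ` on pairs of characters. -/
def dualSmulPair (a : Kˣ) : AddDual K × AddDual K → AddDual K × AddDual K :=
  Prod.map (dualSmul (a : K)) (dualSmul ((a⁻¹ : Kˣ) : K))

theorem charProd_dualChar_dualSmulPair (a : Kˣ) (v : K × K) (p : AddDual K × AddDual K) :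
    charProd (dualChar K) (dualChar K) v (dualSmulPair a p)
      = charProd (dualChar K) (dualChar K) ((a : K) * v.1, ((a⁻¹ : Kˣ) : K) * v.2) p := rfl

section Marginals

variable [MeasurableSpace (AddDual K)] {θ : Measure (AddDual K × AddDual K)}

theorem isErgodicFamily_fst (herg : IsErgodicFamily (fun a : Kˣ => dualSmulPair a) θ) :
    IsErgodicFamily (fun a : Kˣ => dualSmul (a : K)) θ.fst :=
  herg.map measurable_fst fun _ _ => rfl

theorem isErgodicFamily_snd (herg : IsErgodicFamily (fun a : Kˣ => dualSmulPair a) θ) :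
    IsErgodicFamily (fun a : Kˣ => dualSmul (a : K)) θ.snd :=
  .of_comp (f := fun a : Kˣ => a⁻¹) (herg.map measurable_snd fun _ _ => rfl)

variable [BorelSpace (AddDual K)]

theorem measurable_dualSmulPair (a : Kˣ) : Measurable (dualSmulPair (K := K) a) :=
  (continuous_dualSmul _).measurable.prodMap (continuous_dualSmul _).measurable

theorem fst_map_dualSmul_eq (hθ : ∀ a : Kˣ, θ.map (dualSmulPair a) = θ) (a : Kˣ) :
    θ.fst.map (dualSmul (a : K)) = θ.fst := by
  conv_rhs => rw [← hθ a]
  rw [Measure.fst, Measure.fst,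
    Measure.map_map (continuous_dualSmul _).measurable measurable_fst,
    Measure.map_map measurable_fst (measurable_dualSmulPair a)]
  rfl

theorem snd_map_dualSmul_eq (hθ : ∀ a : Kˣ, θ.map (dualSmulPair a) = θ) (a : Kˣ) :
    θ.snd.map (dualSmul (a : K)) = θ.snd := by
  conv_rhs => rw [← hθ a⁻¹]
  rw [Measure.snd, Measure.snd,
    Measure.map_map (continuous_dualSmul _).measurable measurable_snd,
    Measure.map_map measurable_snd (measurable_dualSmulPair _)]
  simp only [dualSmulPair, inv_inv]
  rfl

theorem map_dualSmulPair_prod_eq {μ ν : Measure (AddDual K)} [SFinite μ] [SFinite ν] {a : Kˣ}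
    (hμ : μ.map (dualSmul (a : K)) = μ) (hν : ν.map (dualSmul ((a⁻¹ : Kˣ) : K)) = ν) :
    (μ.prod ν).map (dualSmulPair a) = μ.prod ν := by
  rw [dualSmulPair, ← Measure.map_prod_map μ ν (continuous_dualSmul _).measurable
    (continuous_dualSmul _).measurable, hμ, hν]

end Marginals

variable [MeasurableSpace (AddDual K)] [BorelSpace (AddDual K)]

theorem charCoeff_mul_of_map_dualSmul_eq {μ : Measure (AddDual K)} {a : K}
    (ha : μ.map (dualSmul a) = μ) (x : K) :
    charCoeff (dualChar K) μ (a * x) = charCoeff (dualChar K) μ x := by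
  conv_rhs => rw [← ha, charCoeff_map _ (continuous_dualSmul a).measurable.aemeasurable]
  rfl

variable [Countable K]

section OneFactor

variable (mK : Measure (AddDual K)) [mK.IsHaarMeasure] [IsProbabilityMeasure mK]
  {μ : Measure (AddDual K)} [IsProbabilityMeasure μ]

theorem eq_haar_of_map_dualSmul_eq [Infinite K] (hμ : ∀ a : Kˣ, μ.map (dualSmul (a : K)) = μ)
    (h1 : μ {1} = 0) : μ = mK := by
  have hconst : ∀ x ≠ 0, charCoeff (dualChar K) μ x = charCoeff (dualChar K) μ 1 := fun x hx => by
    simpa using charCoeff_mul_of_map_dualSmul_eq (hμ (Units.mk0 x hx)) 1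
  have hreal : starRingEnd ℂ (charCoeff (dualChar K) μ 1) = charCoeff (dualChar K) μ 1 := by
    rw [← charCoeff_neg, hconst (-1) (neg_ne_zero.2 one_ne_zero)]
  obtain ⟨r, hr⟩ := Complex.conj_eq_iff_real.1 hreal
  exact eq_haar_of_charCoeff_eq_const mK (fun x hx => (hconst x hx).trans hr) h1

theorem eq_dirac_one_or_eq_haar_of_isErgodicFamily [Infinite K]
    (hμ : ∀ a : Kˣ, μ.map (dualSmul (a : K)) = μ)
    (herg : IsErgodicFamily (fun a : Kˣ => dualSmul (a : K)) μ) :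
    μ = Measure.dirac 1 ∨ μ = mK := by
  rcases herg {1} (measurableSet_singleton 1) fun a => Set.ext fun ξ => dualSmul_eq_one_iff a with
    h0 | h1
  · exact .inr (eq_haar_of_map_dualSmul_eq mK hμ h0)
  · have hae : ∀ᵐ ξ ∂μ, ξ = 1 := (mem_ae_iff_prob_eq_one (measurableSet_singleton 1)).2 h1
    have hmap : μ.map id = μ.map fun _ => 1 := Measure.map_congr hae
    rw [Measure.map_id, Measure.map_const, measure_univ, one_smul] at hmap
    exact .inl hmap

end OneFactor

section Joining

variable {θ : Measure (AddDual K × AddDual K)}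

theorem charCoeff_eq_charCoeff_mul_one (hθ : ∀ a : Kˣ, θ.map (dualSmulPair a) = θ) (x : K) {y : K}
    (hy : y ≠ 0) : charCoeff (charProd (dualChar K) (dualChar K)) θ (x, y)
      = charCoeff (charProd (dualChar K) (dualChar K)) θ (x * y, 1) := by
  conv_lhs => rw [← hθ (Units.mk0 y hy),
    charCoeff_map _ (measurable_dualSmulPair _).aemeasurable]
  simp [charProd_dualChar_dualSmulPair, charCoeff, hy, mul_comm]

variable [Infinite K] (mK : Measure (AddDual K)) [mK.IsHaarMeasure] [IsFiniteMeasure θ]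

theorem charCoeff_eq_zero_of_fst_eq_haar (hθ : ∀ a : Kˣ, θ.map (dualSmulPair a) = θ)
    (hfst : θ.fst = mK) {x y : K} (hx : x ≠ 0) (hy : y ≠ 0) :
    charCoeff (charProd (dualChar K) (dualChar K)) θ (x, y) = 0 := by
  let S : Kˣ → K × K → K × K := fun a v => (a * v.1, (a⁻¹ : Kˣ) * v.2)
  have hdecay : ∀ a : Kˣ, Tendsto
      (fun b => charCoeff (charProd (dualChar K) (dualChar K)) θ (S b (x, y) - S a (x, y)))
      cofinite (𝓝 0) := fun a => by
    refine ((tendsto_charCoeff_of_fst_eq_haar mK (dualChar K) hfst 1).comp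
      (tendsto_sub_mul_inv_sub_inv_mul_cofinite a (mul_ne_zero hx hy))).congr' ?_
    filter_upwards [(Set.finite_singleton a).compl_mem_cofinite] with b hb
    have hba : ((b⁻¹ : Kˣ) - (a⁻¹ : Kˣ) : K) ≠ 0 :=
      sub_ne_zero.2 fun hab => hb (inv_injective (Units.ext hab))
    simp only [S, Prod.mk_sub_mk, ← sub_mul, Function.comp_apply]
    rw [charCoeff_eq_charCoeff_mul_one hθ _ (mul_ne_zero hba hy), mul_mul_mul_comm]
  simpa [charCoeff] using setIntegral_char_eq_zero_of_tendsto
    (fun a => ⟨measurable_dualSmulPair a, hθ a⟩) charProd_dualChar_dualSmulPair hdecay .univ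
    fun _ => rfl

theorem eq_prod_haar_of_marginals_eq_haar [IsProbabilityMeasure mK]
    (hθ : ∀ a : Kˣ, θ.map (dualSmulPair a) = θ) (hfst : θ.fst = mK) (hsnd : θ.snd = mK) :
    θ = mK.prod mK := by
  refine ext_of_charCoeff (charProd_separates (dualChar_separates K) (dualChar_separates K)) ?_
  rintro ⟨x, y⟩
  rw [charCoeff_prod]
  rcases eq_or_ne x 0 with rfl | hx
  · rw [← charCoeff_snd, hsnd, charCoeff_zero, one_mul]
  rcases eq_or_ne y 0 with rfl | hy
  · rw [← charCoeff_fst, hfst, charCoeff_zero, mul_one]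
  · rw [charCoeff_eq_zero_of_fst_eq_haar mK hθ hfst hx hy, charCoeff_haar_of_ne_zero mK hx,
      zero_mul]

end Joining

section Product

variable {mK : Measure (AddDual K)} [mK.IsHaarMeasure]

theorem dualChar_ae_eq_one_or_charCoeff_eq_zero {μ : Measure (AddDual K)}
    (hμ : μ = Measure.dirac 1 ∨ μ = mK) (x : K) :
    (∀ᵐ ξ ∂μ, dualChar K x ξ = 1) ∨ ∀ c ≠ 0, charCoeff (dualChar K) μ (c * x) = 0 := by
  rcases hμ with rfl | rfl
  · left
    simp [ae_dirac_eq, dualChar_one_right]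
  · refine (eq_or_ne x 0).imp (fun hx => ?_) fun hx c hc => ?_
    · simp [hx]
    · exact charCoeff_haar_of_ne_zero μ (mul_ne_zero hc hx)

variable [IsProbabilityMeasure mK]

theorem map_dualSmul_eq_of_eq_dirac_one_or_eq_haar {μ : Measure (AddDual K)}
    (hμ : μ = Measure.dirac 1 ∨ μ = mK) (a : Kˣ) : μ.map (dualSmul (a : K)) = μ := by
  have ha := (continuous_dualSmul (a : K)).measurable
  rcases hμ with rfl | rfl
  · rw [Measure.map_dirac' ha, dualSmul_one_right]
  · have := Measure.isProbabilityMeasure_map (μ := μ) ha.aemeasurable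
    refine eq_haar_of_charCoeff_eq_zero μ fun x hx => ?_
    rw [charCoeff_map _ ha.aemeasurable]
    exact charCoeff_haar_of_ne_zero μ (mul_ne_zero a.ne_zero hx)

variable {μ ν : Measure (AddDual K)} [IsProbabilityMeasure μ] [IsProbabilityMeasure ν]

theorem isErgodicFamily_dualSmulPair_prod [Infinite K] (hμ : μ = Measure.dirac 1 ∨ μ = mK)
    (hν : ν = Measure.dirac 1 ∨ ν = mK) :
    IsErgodicFamily (fun a : Kˣ => dualSmulPair a) (μ.prod ν) := by
  refine isErgodicFamily_of_tendsto_charCoeff (l := cofinite)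
    (charProd_separates (dualChar_separates K) (dualChar_separates K))
    (fun a => ⟨measurable_dualSmulPair a, map_dualSmulPair_prod_eq
      (map_dualSmul_eq_of_eq_dirac_one_or_eq_haar hμ a)
      (map_dualSmul_eq_of_eq_dirac_one_or_eq_haar hν a⁻¹)⟩)
    charProd_dualChar_dualSmulPair ?_
  rintro ⟨x, y⟩
  have hvanish : (∀ c ≠ 0, charCoeff (dualChar K) μ (c * x) = 0) ∨
      (∀ c ≠ 0, charCoeff (dualChar K) ν (c * y) = 0) → ∀ a : Kˣ, Tendsto (fun b : Kˣ =>
        charCoeff (charProd (dualChar K) (dualChar K)) (μ.prod ν)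
          ((b * x, (b⁻¹ : Kˣ) * y) - (a * x, (a⁻¹ : Kˣ) * y))) cofinite (𝓝 0) := fun h a => by
    refine tendsto_const_nhds.congr' ?_
    filter_upwards [(Set.finite_singleton a).compl_mem_cofinite] with b hb
    have hba : (b - a : K) ≠ 0 := sub_ne_zero.2 fun hab => hb (Units.ext hab)
    have hba' : ((b⁻¹ : Kˣ) - (a⁻¹ : Kˣ) : K) ≠ 0 :=
      sub_ne_zero.2 fun hab => hb (inv_injective (Units.ext hab))
    rw [charCoeff_prod, Prod.mk_sub_mk, ← sub_mul, ← sub_mul]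
    rcases h with h | h
    · rw [h _ hba, zero_mul]
    · rw [h _ hba', mul_zero]
  rcases dualChar_ae_eq_one_or_charCoeff_eq_zero hμ x with hx | hx
  · rcases dualChar_ae_eq_one_or_charCoeff_eq_zero hν y with hy | hy
    · left
      filter_upwards [Measure.quasiMeasurePreserving_fst.ae hx,
        Measure.quasiMeasurePreserving_snd.ae hy] with p hpx hpy
      exact Circle.ext (by simp [coe_charProd_apply, hpx, hpy])
    · exact .inr (hvanish (.inr hy))
  · exact .inr (hvanish (.inl hx))

end Product

end Field

/-- The `K^*`-action `a.(ξ₁, ξ₂) = (a* ξ₁, (a⁻¹)* ξ₂)` on `K̂ × K̂` has exactly four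
ergodic invariant Borel probability measures. -/
theorem statement1
    {K : Type*} [Field K] [Countable K] [Infinite K]
    [TopologicalSpace K] [DiscreteTopology K]
    [MeasurableSpace (AddDual K)] [BorelSpace (AddDual K)]
    (mK : Measure (AddDual K)) [mK.IsHaarMeasure] [IsProbabilityMeasure mK]
    (θ : Measure (AddDual K × AddDual K)) [IsProbabilityMeasure θ] :
    ((∀ a : Kˣ,
        θ.map (Prod.map (dualSmul (a : K)) (dualSmul ((a⁻¹ : Kˣ) : K))) = θ) ∧
      IsErgodicFamily
        (fun a : Kˣ => Prod.map (dualSmul (a : K)) (dualSmul ((a⁻¹ : Kˣ) : K))) θ)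
    ↔ (θ = (Measure.dirac 1).prod (Measure.dirac 1) ∨
        θ = (Measure.dirac 1).prod mK ∨
        θ = mK.prod (Measure.dirac 1) ∨
        θ = mK.prod mK) := by
  constructor
  · rintro ⟨hinv, herg⟩
    have hfst := eq_dirac_one_or_eq_haar_of_isErgodicFamily mK (fst_map_dualSmul_eq hinv)
      (isErgodicFamily_fst herg)
    have hsnd := eq_dirac_one_or_eq_haar_of_isErgodicFamily mK (snd_map_dualSmul_eq hinv)
      (isErgodicFamily_snd herg)
    rcases hfst with hfst | hfst <;> rcases hsnd with hsnd | hsnd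
    · exact .inl (hsnd ▸ eq_dirac_prod_snd_of_fst_eq_dirac hfst)
    · exact .inr (.inl (hsnd ▸ eq_dirac_prod_snd_of_fst_eq_dirac hfst))
    · exact .inr (.inr (.inl (hfst ▸ eq_prod_dirac_of_snd_eq_dirac hsnd)))
    · exact .inr (.inr (.inr (eq_prod_haar_of_marginals_eq_haar mK hinv hfst hsnd)))
  · rintro (rfl | rfl | rfl | rfl) <;>
      refine ⟨fun a => map_dualSmulPair_prod_eq
        (map_dualSmul_eq_of_eq_dirac_one_or_eq_haar (mK := mK) ?_ a)
        (map_dualSmul_eq_of_eq_dirac_one_or_eq_haar (mK := mK) ?_ a⁻¹),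
        isErgodicFamily_dualSmulPair_prod (mK := mK) ?_ ?_⟩ <;>
      simp only [true_or, or_true]

end
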